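/- Let ℓ be an odd prime different from char(K) and suppose ζ_ℓ ∉ K and ζ_ℓ ∈ Γ. Let τ ≥ 1 be the largest integer such that ζ_{ℓ^τ} ∈ Γ ∩ K(W_ℓ, ζ_ℓ). Then K(Γ_ℓ) ∩ K(W_ℓ, ζ_ℓ) = K(ζ_{ℓ^τ}). -/

import Mathlib

noncomputable section

open IntermediateField

/-- `K^×` viewed as a subgroup of the units of the algebraic closure of `K`. -/
def baseUnits (K : Type*) [Field K] : Subgroup (AlgebraicClosure K)ˣ :=
  (Units.map (algebraMap K (AlgebraicClosure K)).toMonoidHom).range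

/-- The subgroup of `(AlgebraicClosure K)ˣ` of elements whose `m`-th power lies in `K^×`. -/
def radGroup (K : Type*) [Field K] (m : ℕ) : Subgroup (AlgebraicClosure K)ˣ where
  carrier := {x | ∃ y : K, algebraMap K (AlgebraicClosure K) y = (x : AlgebraicClosure K) ^ m}
  one_mem' := ⟨1, by simp⟩
  mul_mem' := by
    rintro a b ⟨y, hy⟩ ⟨z, hz⟩
    exact ⟨y * z, by rw [map_mul, hy, hz, Units.val_mul, mul_pow]⟩
  inv_mem' := by
    rintro a ⟨y, hy⟩
    refine ⟨y⁻¹, ?_⟩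
    rw [map_inv₀, hy, Units.val_inv_eq_inv_val, inv_pow]

lemma radGroup_le (K : Type*) [Field K] {m k : ℕ} :
    radGroup K m ≤ radGroup K (m * k) := by
  rintro x ⟨y, hy⟩
  exact ⟨y ^ k, by rw [map_pow, hy, ← pow_mul]⟩

/-- The group `√[ℓ^∞]{K^×}` of radicals of `ℓ`-power order over `K`. -/
def radInf (K : Type*) [Field K] (ℓ : ℕ) : Subgroup (AlgebraicClosure K)ˣ where
  carrier := {x | ∃ n : ℕ, x ∈ radGroup K (ℓ ^ n)}
  one_mem' := ⟨0, one_mem _⟩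
  mul_mem' := by
    rintro a b ⟨n, ha⟩ ⟨m, hb⟩
    refine ⟨n + m, mul_mem ?_ ?_⟩
    · have h : radGroup K (ℓ ^ n) ≤ radGroup K (ℓ ^ (n + m)) := by
        rw [pow_add]; exact radGroup_le K
      exact h ha
    · have h : radGroup K (ℓ ^ m) ≤ radGroup K (ℓ ^ (n + m)) := by
        rw [add_comm, pow_add]; exact radGroup_le K
      exact h hb
  inv_mem' := by
    rintro a ⟨n, ha⟩
    exact ⟨n, inv_mem ha⟩

/-- The units of the algebraic closure lying in an intermediate field `F`, as a subgroup. -/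
def unitsIn {K : Type*} [Field K] (F : IntermediateField K (AlgebraicClosure K)) :
    Subgroup (AlgebraicClosure K)ˣ where
  carrier := {x | (x : AlgebraicClosure K) ∈ F}
  one_mem' := by
    show ((1 : (AlgebraicClosure K)ˣ) : AlgebraicClosure K) ∈ F
    simpa using one_mem F
  mul_mem' := by
    intro a b ha hb
    show ((a * b : (AlgebraicClosure K)ˣ) : AlgebraicClosure K) ∈ F
    rw [Units.val_mul]
    exact mul_mem ha hb
  inv_mem' := by
    intro x hx
    show ((x⁻¹ : (AlgebraicClosure K)ˣ) : AlgebraicClosure K) ∈ F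
    rw [Units.val_inv_eq_inv_val]
    exact inv_mem hx

/-- `K(ζ_{2𝒫})`: the extension of `K` generated by all roots of unity whose order is `4` or
an odd prime, and not divisible by the characteristic of `K`. -/
def cyclo2P (K : Type*) [Field K] : IntermediateField K (AlgebraicClosure K) :=
  IntermediateField.adjoin K
    {x : AlgebraicClosure K |
      ∃ n : ℕ, (n = 4 ∨ (n.Prime ∧ Odd n)) ∧ ¬ (ringChar K ∣ n) ∧ IsPrimitiveRoot x n}

/-- The set of roots of unity of order exactly `n` in the algebraic closure of `K`. -/
def primRoots (K : Type*) [Field K] (n : ℕ) : Set (AlgebraicClosure K) :=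
  {x | IsPrimitiveRoot x n}

/-- The set of roots of unity of order `ℓ^n` for `n ≤ t` (all of them if `t = ∞`). -/
def pPowRoots (K : Type*) [Field K] (ℓ : ℕ) (t : ℕ∞) : Set (AlgebraicClosure K) :=
  {x | ∃ n : ℕ, (n : ℕ∞) ≤ t ∧ IsPrimitiveRoot x (ℓ ^ n)}

/-- The set of units that are roots of unity of order `ℓ^n` for `n ≤ t`. -/
def pPowRootsUnits (K : Type*) [Field K] (ℓ : ℕ) (t : ℕ∞) : Set (AlgebraicClosure K)ˣ :=
  {x | ∃ n : ℕ, (n : ℕ∞) ≤ t ∧ IsPrimitiveRoot (x : AlgebraicClosure K) (ℓ ^ n)}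



lemma aux_geom {ℓ : ℕ} (hℓ : ℓ.Prime) (hodd : Odd ℓ) (c : ℤ) (hc : (ℓ : ℤ) ∣ c - 1)
    (h : (ℓ : ℤ) ^ 2 ∣ ∑ i ∈ Finset.range ℓ, c ^ i) : False := by
  obtain ⟨b, hb⟩ := hc
  have h1 := @odd_sq_dvd_geom_sum₂_sub ℤ _ 1 b ℓ hodd
  have hc' : (1 : ℤ) + ℓ * b = c := by linarith
  simp only [hc', one_pow, mul_one] at h1
  have h2 : (ℓ : ℤ) ^ 2 ∣ ℓ := by
    have := dvd_sub h h1
    simpa using this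
  have h3 : ℓ ^ 2 ∣ ℓ := by exact_mod_cast h2
  have h4 := Nat.le_of_dvd hℓ.pos h3
  nlinarith [hℓ.two_le]

/-- Radical elements in a cyclic Kummer extension of degree `ℓ`. -/
lemma rad_simple {F N : Type*} [Field F] [Field N] [Algebra F N] [FiniteDimensional F N]
    [IsGalois F N] {ℓ : ℕ} (hℓ : ℓ.Prime) (hodd : Odd ℓ) (hrank : Module.finrank F N = ℓ)
    {z : F} (hz : IsPrimitiveRoot z ℓ) {α : N} (hα : α ∉ Set.range (algebraMap F N))
    (hαℓ : α ^ ℓ ∈ Set.range (algebraMap F N)) {e : N} (he0 : e ≠ 0) {n : ℕ}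
    (he : e ^ (ℓ ^ n) ∈ Set.range (algebraMap F N)) :
    ∃ (i : ℕ) (c : F), e = α ^ i * algebraMap F N c := by
  have : Fact ℓ.Prime := ⟨hℓ⟩
  have hcard : Nat.card (N ≃ₐ[F] N) = ℓ := by rw [IsGalois.card_aut_eq_finrank, hrank]
  have hα0 : α ≠ 0 := by
    rintro rfl; exact hα ⟨0, by simp⟩
  obtain ⟨σ, hσα⟩ : ∃ σ : N ≃ₐ[F] N, σ α ≠ α := by
    by_contra! hcon
    exact hα ((IsGalois.mem_range_algebraMap_iff_fixed α).2 hcon)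
  have hσ1 : σ ≠ 1 := by rintro rfl; exact hσα rfl
  have hfix : ∀ x : N, σ x = x → x ∈ Set.range (algebraMap F N) := by
    intro x hx
    refine (IsGalois.mem_range_algebraMap_iff_fixed x).2 fun τ => ?_
    have hτ : τ ∈ Submonoid.powers σ := mem_powers_of_prime_card hcard hσ1
    obtain ⟨k, rfl⟩ := hτ
    show (σ ^ k) x = x
    induction k with
    | zero => rfl
    | succ k ih => rw [pow_succ, AlgEquiv.mul_apply, hx, ih]
  have hσℓ : σ ^ ℓ = 1 := by rw [← hcard]; exact pow_card_eq_one'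
  have hzN : IsPrimitiveRoot (algebraMap F N z) ℓ :=
    hz.map_of_injective (algebraMap F N).injective
  -- the roots of unity of order dividing `ℓ` are in `F`
  have hmuℓ : ∀ x : N, x ^ ℓ = 1 → σ x = x := by
    intro x hx
    have : NeZero ℓ := ⟨hℓ.ne_zero⟩
    obtain ⟨i, -, rfl⟩ := hzN.eq_pow_of_pow_eq_one hx
    simp
  -- `σ α = ω α`
  set ω := σ α / α with hω
  have hωα : σ α = ω * α := by rw [hω]; field_simp
  have hωℓ : ω ^ ℓ = 1 := by
    obtain ⟨a, ha⟩ := hαℓ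
    rw [hω, div_pow, ← map_pow, ← ha, AlgEquiv.commutes, div_self]
    rw [ha]; exact pow_ne_zero _ hα0
  have hω1 : ω ≠ 1 := by
    intro h; rw [h, one_mul] at hωα; exact hσα hωα
  have hωprim : IsPrimitiveRoot ω ℓ := by
    rw [← orderOf_eq_prime hωℓ hω1]; exact IsPrimitiveRoot.orderOf ω
  -- `σ e = ζ e`
  set ζ := σ e / e with hζ
  have hζe : σ e = ζ * e := by rw [hζ]; field_simp
  have hζn : ζ ^ (ℓ ^ n) = 1 := by
    obtain ⟨a, ha⟩ := he
    rw [hζ, div_pow, ← map_pow, ← ha, AlgEquiv.commutes, div_self]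
    rw [ha]; exact pow_ne_zero _ he0
  have hζℓ : ζ ^ ℓ = 1 := by
    obtain ⟨k, hkn, hk⟩ := (Nat.dvd_prime_pow hℓ).1 (orderOf_dvd_of_pow_eq_one hζn)
    have hprim : IsPrimitiveRoot ζ (ℓ ^ k) := hk ▸ IsPrimitiveRoot.orderOf ζ
    rcases Nat.lt_or_ge k 2 with hk2 | hk2
    · have : ℓ ^ k ∣ ℓ ^ 1 := pow_dvd_pow _ (by omega)
      rw [pow_one] at this
      exact (hprim.pow_eq_one_iff_dvd ℓ).2 this
    exfalso
    have : NeZero (ℓ ^ k) := ⟨pow_ne_zero _ hℓ.ne_zero⟩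
    obtain ⟨c, -, hc⟩ := hprim.eq_pow_of_pow_eq_one
      (ξ := σ ζ) (by rw [← map_pow, hprim.pow_eq_one, map_one])
    -- c = 1 mod ℓ
    have hkk : ℓ ^ k = ℓ ^ (k - 1) * ℓ := by rw [← pow_succ]; congr 1; omega
    have hprim' : IsPrimitiveRoot (ζ ^ (ℓ ^ (k - 1))) ℓ :=
      hprim.pow (pow_pos hℓ.pos _) hkk
    have h1 := hmuℓ _ hprim'.pow_eq_one
    have h2 : (ζ ^ (ℓ ^ (k - 1))) ^ c = (ζ ^ (ℓ ^ (k - 1))) ^ 1 := by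
      rw [pow_one]
      conv_rhs => rw [← h1, map_pow, ← hc]
      rw [← pow_mul, ← pow_mul, mul_comm]
    have hcdvd : (ℓ : ℤ) ∣ (c : ℤ) - 1 := by
      rw [← hprim'.zpow_eq_one_iff_dvd, zpow_sub₀ (hprim'.ne_zero hℓ.ne_zero), zpow_natCast, h2]
      simp [hprim'.ne_zero hℓ.ne_zero]
    -- iterates
    have hit : ∀ j : ℕ, (σ ^ j) ζ = ζ ^ (c ^ j) := by
      intro j
      induction j with
      | zero => simp
      | succ j ih => rw [pow_succ, AlgEquiv.mul_apply, ← hc, map_pow, ih, ← pow_mul, ← pow_succ]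
    have hit2 : ∀ j : ℕ, (σ ^ j) e = ζ ^ (∑ i ∈ Finset.range j, c ^ i) * e := by
      intro j
      induction j with
      | zero => simp
      | succ j ih =>
        rw [pow_succ, AlgEquiv.mul_apply, hζe, map_mul, hit, ih, Finset.sum_range_succ, pow_add]
        ring
    have h5 := hit2 ℓ
    rw [hσℓ, AlgEquiv.one_apply] at h5
    have h6 : ζ ^ (∑ i ∈ Finset.range ℓ, c ^ i) = 1 := by
      apply mul_right_cancel₀ he0
      rw [← h5, one_mul]
    have h7 := (hprim.pow_eq_one_iff_dvd _).1 h6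
    have h8 : ℓ ^ 2 ∣ ∑ i ∈ Finset.range ℓ, c ^ i := (pow_dvd_pow _ hk2).trans h7
    refine aux_geom hℓ hodd c hcdvd ?_
    exact_mod_cast h8
  have : NeZero ℓ := ⟨hℓ.ne_zero⟩
  obtain ⟨i, -, hi⟩ := hωprim.eq_pow_of_pow_eq_one hζℓ
  have hωfix := hmuℓ ω hωℓ
  have hω0 : ω ≠ 0 := hωprim.ne_zero hℓ.ne_zero
  obtain ⟨c, hc⟩ := hfix (e / α ^ i) (by
    rw [map_div₀, map_pow, hωα, hζe, ← hi, mul_pow]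
    field_simp)
  refine ⟨i, c, ?_⟩
  rw [hc]
  field_simp

/-- Simple Kummer extensions of prime degree. -/
lemma kummer_simple {F Ω : Type*} [Field F] [Field Ω] [Algebra F Ω] {ℓ : ℕ} (hℓ : ℓ.Prime)
    {z : F} (hz : IsPrimitiveRoot z ℓ) {α : Ω} (hα : α ∉ Set.range (algebraMap F Ω))
    (hαℓ : α ^ ℓ ∈ Set.range (algebraMap F Ω)) :
    Module.finrank F F⟮α⟯ = ℓ ∧ FiniteDimensional F F⟮α⟯ ∧ IsGalois F F⟮α⟯ := by
  obtain ⟨a, ha⟩ := hαℓ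
  have : NeZero ℓ := ⟨hℓ.ne_zero⟩
  have hzΩ : IsPrimitiveRoot (algebraMap F Ω z) ℓ :=
    hz.map_of_injective (algebraMap F Ω).injective
  have hirr : Irreducible (Polynomial.X ^ ℓ - Polynomial.C a) := by
    rw [X_pow_sub_C_irreducible_iff_of_prime hℓ]
    intro b hb
    by_cases hb0 : b = 0
    · have hα0 : α = 0 := by
        have : α ^ ℓ = 0 := by rw [← ha, ← hb, hb0, zero_pow hℓ.ne_zero, map_zero]
        exact pow_eq_zero_iff hℓ.ne_zero |>.1 this
      exact hα ⟨0, by simp [hα0]⟩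
    have hb0' : algebraMap F Ω b ≠ 0 := by simpa using hb0
    have h1 : (α / algebraMap F Ω b) ^ ℓ = 1 := by
      rw [div_pow, ← ha, ← hb, map_pow, div_self (pow_ne_zero _ hb0')]
    obtain ⟨i, -, hi⟩ := hzΩ.eq_pow_of_pow_eq_one h1
    refine hα ⟨z ^ i * b, ?_⟩
    rw [map_mul, map_pow, hi]
    field_simp
  have hinteg : IsIntegral F α := by
    refine ⟨Polynomial.X ^ ℓ - Polynomial.C a, Polynomial.monic_X_pow_sub_C a hℓ.ne_zero, ?_⟩
    simp [ha]
  have hmin : minpoly F α = Polynomial.X ^ ℓ - Polynomial.C a := by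
    symm
    apply minpoly.eq_of_irreducible_of_monic hirr _ (Polynomial.monic_X_pow_sub_C a hℓ.ne_zero)
    simp [ha]
  have hfr : Module.finrank F F⟮α⟯ = ℓ := by
    rw [IntermediateField.adjoin.finrank hinteg, hmin, Polynomial.natDegree_X_pow_sub_C]
  have hfd : FiniteDimensional F F⟮α⟯ := IntermediateField.adjoin.finiteDimensional hinteg
  refine ⟨hfr, hfd, ?_⟩
  have hK : (primitiveRoots (Module.finrank F F⟮α⟯) F).Nonempty :=
    ⟨z, by rw [hfr, mem_primitiveRoots hℓ.pos]; exact hz⟩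
  have htf := (isCyclic_tfae F F⟮α⟯ hK).out 2 0
  refine (htf.1 ⟨AdjoinSimple.gen F α, ⟨a, ?_⟩, ?_⟩).1
  · rw [hfr]
    apply Subtype.ext
    simpa using ha
  · apply IntermediateField.lift_injective F⟮α⟯
    rw [IntermediateField.lift_adjoin_simple, IntermediateField.lift_top]
    simp

/-- Radicals in abelian extensions not containing `ζ_ℓ` in the base field. -/
lemma schinzel {K C : Type*} [Field K] [Field C] [Algebra K C] [FiniteDimensional K C]
    [IsAbelianGalois K C] {ℓ : ℕ} (hℓ : ℓ.Prime)
    {z : C} (hz : IsPrimitiveRoot z ℓ) (hzK : z ∉ Set.range (algebraMap K C))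
    {g : C} (hg0 : g ≠ 0) {n : ℕ} (hg : g ^ (ℓ ^ n) ∈ Set.range (algebraMap K C)) :
    ∃ (η : C) (k : K), η ^ (ℓ ^ (n + 1)) = 1 ∧ g = η * algebraMap K C k := by
  obtain ⟨σ, hσz⟩ : ∃ σ : C ≃ₐ[K] C, σ z ≠ z := by
    by_contra! hcon
    exact hzK ((IsGalois.mem_range_algebraMap_iff_fixed z).2 hcon)
  have hgn : g ^ (ℓ ^ (n + 1)) ∈ Set.range (algebraMap K C) := by
    obtain ⟨a, ha⟩ := hg
    exact ⟨a ^ ℓ, by rw [map_pow, ha, ← pow_mul, ← pow_succ]⟩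
  have hchi : ∀ τ : C ≃ₐ[K] C, (τ g / g) ^ (ℓ ^ (n + 1)) = 1 := by
    intro τ
    obtain ⟨a, ha⟩ := hgn
    rw [div_pow, ← map_pow, ← ha, AlgEquiv.commutes, div_self]
    rw [ha]; exact pow_ne_zero _ hg0
  have : NeZero (ℓ ^ (n + 1)) := ⟨pow_ne_zero _ hℓ.ne_zero⟩
  obtain ⟨m, hm⟩ := MonoidHom.map_cyclic (restrictRootsOfUnity σ (ℓ ^ (n + 1)))
  have hm' : ∀ x : C, x ^ (ℓ ^ (n + 1)) = 1 → σ x = x ^ m := by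
    intro x hx
    have h1 := hm (rootsOfUnity.mkOfPowEq x hx)
    have h2 := congrArg (fun y : rootsOfUnity (ℓ ^ (n + 1)) C => ((y : Cˣ) : C)) h1
    simpa using h2
  have hmℓ : ¬ (ℓ : ℤ) ∣ m - 1 := by
    rintro ⟨d, hd⟩
    have h1 : z ^ (ℓ ^ (n + 1)) = 1 := by
      rw [pow_succ', pow_mul, hz.pow_eq_one, one_pow]
    apply hσz
    rw [hm' z h1]
    have hz0 := hz.ne_zero hℓ.ne_zero
    have : m = 1 + ℓ * d := by linarith
    rw [this, zpow_add₀ hz0, zpow_mul, zpow_natCast, hz.pow_eq_one, one_zpow, zpow_one, mul_one]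
  have hcop : IsCoprime (m - 1) ((ℓ : ℤ) ^ (n + 1)) := by
    apply IsCoprime.pow_right
    exact ((Nat.prime_iff_prime_int.1 hℓ).coprime_iff_not_dvd.2 hmℓ).symm
  obtain ⟨t, u, htu⟩ := hcop
  have hpow : ∀ x : C, x ≠ 0 → x ^ (ℓ ^ (n + 1)) = 1 → (x ^ (m - 1)) ^ t = x := by
    intro x hx0 hx
    rw [← zpow_mul]
    have : (m - 1) * t = 1 - ((ℓ ^ (n + 1) : ℕ) : ℤ) * u := by push_cast; linarith
    rw [this, zpow_sub₀ hx0, zpow_mul, zpow_natCast, hx, one_zpow, zpow_one, div_one]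
  have hmap0 : ∀ (τ : C ≃ₐ[K] C) (x : C), x ≠ 0 → τ x ≠ 0 := fun τ x hx => by simpa using hx
  set ζ := σ g / g with hζ
  have hζ0 : ζ ≠ 0 := div_ne_zero (hmap0 σ g hg0) hg0
  have hσg : σ g = ζ * g := by rw [hζ]; field_simp
  have hη0 : ζ ^ t ≠ 0 := zpow_ne_zero _ hζ0
  obtain ⟨k, hk⟩ := (IsGalois.mem_range_algebraMap_iff_fixed (F := K) (g / ζ ^ t)).2 (by
    intro τ
    set χ := τ g / g with hχ
    have hχ0 : χ ≠ 0 := div_ne_zero (hmap0 τ g hg0) hg0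
    have hτg : τ g = χ * g := by rw [hχ]; field_simp
    have hcomm : σ (τ g) = τ (σ g) := by
      have := congrArg (fun f : C ≃ₐ[K] C => f g) (mul_comm' σ τ)
      simpa using this
    rw [hτg, hσg, map_mul, map_mul, hσg, hτg, hm' χ (hchi τ)] at hcomm
    have h2 : χ ^ (m - 1) = τ ζ / ζ := by
      rw [zpow_sub₀ hχ0, zpow_one]
      have := mul_right_cancel₀ hg0 (show (χ ^ m * ζ) * g = (τ ζ * χ) * g by
        linear_combination hcomm)
      field_simp
      linear_combination this
    have h3 : χ = τ ζ ^ t / ζ ^ t := by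
      rw [← div_zpow, ← h2, hpow χ hχ0 (hchi τ)]
    have h4 : τ ζ ^ t ≠ 0 := zpow_ne_zero _ (hmap0 τ _ hζ0)
    rw [map_div₀, map_zpow₀, hτg]
    have h5 : χ * ζ ^ t = τ ζ ^ t := by rw [h3]; field_simp
    rw [div_eq_div_iff h4 hη0]
    linear_combination g * h5)
  refine ⟨ζ ^ t, k, ?_, ?_⟩
  · rw [← zpow_natCast, ← zpow_mul, mul_comm, zpow_mul, zpow_natCast, hchi σ, one_zpow]
  · rw [hk]; field_simp

/-- A nontrivial abelian extension of `ℓ`-power degree contains an `ℓ`-th root. -/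
lemma exists_kummer {E F : Type*} [Field E] [Field F] [Algebra E F] [FiniteDimensional E F]
    [IsAbelianGalois E F] {ℓ : ℕ} (hℓ : ℓ.Prime) {z : E} (hz : IsPrimitiveRoot z ℓ) {k : ℕ}
    (hk : Module.finrank E F = ℓ ^ (k + 1)) :
    ∃ β : F, β ∉ Set.range (algebraMap E F) ∧ β ^ ℓ ∈ Set.range (algebraMap E F) := by
  have : Fact ℓ.Prime := ⟨hℓ⟩
  have hcard : Nat.card (F ≃ₐ[E] F) = ℓ ^ (k + 1) := by rw [IsGalois.card_aut_eq_finrank, hk]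
  obtain ⟨H, hH⟩ := Sylow.exists_subgroup_card_pow_prime (G := F ≃ₐ[E] F) ℓ (n := k)
    (by rw [hcard]; exact pow_dvd_pow _ (Nat.le_succ k))
  let X := IntermediateField.fixedField H
  have h1 : Module.finrank X F = ℓ ^ k := by
    rw [IntermediateField.finrank_fixedField_eq_card, hH]
  have h2 : Module.finrank E X = ℓ := by
    have := Module.finrank_mul_finrank E X F
    rw [h1, hk, pow_succ'] at this
    exact Nat.eq_of_mul_eq_mul_right (pow_pos hℓ.pos k) this
  have : IsCyclic (X ≃ₐ[E] X) := by
    apply isCyclic_of_prime_card (p := ℓ)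
    rw [IsGalois.card_aut_eq_finrank, h2]
  obtain ⟨β, hβ, htop⟩ := exists_root_adjoin_eq_top_of_isCyclic E X
    ⟨z, by rw [h2, mem_primitiveRoots hℓ.pos]; exact hz⟩
  rw [h2] at hβ
  refine ⟨(β : F), ?_, ?_⟩
  · rintro ⟨b, hb⟩
    have hb' : β = algebraMap E X b := Subtype.ext hb.symm
    have : E⟮β⟯ = ⊥ := by
      rw [IntermediateField.adjoin_simple_eq_bot_iff, hb']
      exact IntermediateField.algebraMap_mem _ _
    rw [this] at htop
    have h3 := IntermediateField.finrank_top' (F := E) (E := X)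
    rw [← htop, IntermediateField.finrank_bot, h2] at h3
    exact hℓ.one_lt.ne h3
  · obtain ⟨b, hb⟩ := hβ
    exact ⟨b, by
      have := congrArg (fun x : X => (x : F)) hb
      simpa using this⟩

lemma mem_unitsIn {K : Type*} [Field K] {F : IntermediateField K (AlgebraicClosure K)}
    {x : (AlgebraicClosure K)ˣ} : x ∈ unitsIn F ↔ (x : AlgebraicClosure K) ∈ F := Iff.rfl

lemma relfinrank_adjoin {K Ω : Type*} [Field K] [Field Ω] [Algebra K Ω]
    (E : IntermediateField K Ω) (α : Ω) :
    IntermediateField.relfinrank E (IntermediateField.restrictScalars K E⟮α⟯) =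
      Module.finrank E E⟮α⟯ := by
  have h : E ≤ IntermediateField.restrictScalars K E⟮α⟯ := fun x hx =>
    E⟮α⟯.algebraMap_mem ⟨x, hx⟩
  rw [IntermediateField.relfinrank_eq_finrank_of_le h]
  rfl

/-- A form of the theorem of Kneser for `ℓ`-power radicals, by induction. -/
lemma kneser (K : Type*) [Field K] {ℓ : ℕ} (hℓ : ℓ.Prime) (hodd : Odd ℓ)
    (Γ : Subgroup (AlgebraicClosure K)ˣ)
    (hrad : ∀ g ∈ Γ, ∃ n : ℕ,
      (g : AlgebraicClosure K) ^ (ℓ ^ n) ∈ (⊥ : IntermediateField K (AlgebraicClosure K)))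
    (d : ℕ) : ∀ E : IntermediateField K (AlgebraicClosure K),
      (unitsIn E).relIndex Γ = d → d ≠ 0 →
      E ≤ IntermediateField.adjoin K (Units.val '' (Γ : Set (AlgebraicClosure K)ˣ)) →
      (∃ z ∈ E, IsPrimitiveRoot z ℓ) →
      (∃ k : ℕ, IntermediateField.relfinrank E
        (IntermediateField.adjoin K (Units.val '' (Γ : Set (AlgebraicClosure K)ˣ))) = ℓ ^ k) ∧
      ∀ β : (AlgebraicClosure K)ˣ,
        (β : AlgebraicClosure K) ∈
          IntermediateField.adjoin K (Units.val '' (Γ : Set (AlgebraicClosure K)ˣ)) →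
        ∀ n : ℕ, (β : AlgebraicClosure K) ^ (ℓ ^ n) ∈ E →
          ∃ γ ∈ Γ, ∃ e ∈ unitsIn E, β = γ * e := by
  induction d using Nat.strong_induction_on with
  | _ d ih =>
  intro E hd hd0 hEM hzE
  set M := IntermediateField.adjoin K (Units.val '' (Γ : Set (AlgebraicClosure K)ˣ)) with hM
  by_cases hΓE : Γ ≤ unitsIn E
  · have hME : M ≤ E := by
      rw [hM, IntermediateField.adjoin_le_iff]
      rintro _ ⟨g, hg, rfl⟩
      exact hΓE hg
    refine ⟨⟨0, ?_⟩, ?_⟩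
    · rw [pow_zero, IntermediateField.relfinrank_eq_one_iff]
      exact hME
    · intro β hβ n _
      exact ⟨1, one_mem _, β, hME hβ, (one_mul β).symm⟩
  -- choose `α ∈ Γ` with `α ∉ E` and `α ^ ℓ ∈ E`
  obtain ⟨α, hαΓ, hαE, hαℓ⟩ : ∃ α ∈ Γ, (α : AlgebraicClosure K) ∉ E ∧
      (α : AlgebraicClosure K) ^ ℓ ∈ E := by
    obtain ⟨g, hgΓ, hgE⟩ := SetLike.not_le_iff_exists.1 hΓE
    have hex : ∃ n : ℕ, (g : AlgebraicClosure K) ^ (ℓ ^ n) ∈ E := by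
      obtain ⟨n, hn⟩ := hrad g hgΓ
      exact ⟨n, (bot_le : ⊥ ≤ E) hn⟩
    classical
    have hpos : Nat.find hex ≠ 0 := by
      intro h0
      have := Nat.find_spec hex
      rw [h0, pow_zero, pow_one] at this
      exact hgE this
    obtain ⟨j, hj⟩ := Nat.exists_eq_succ_of_ne_zero hpos
    refine ⟨g ^ (ℓ ^ j), pow_mem hgΓ _, ?_, ?_⟩
    · rw [Units.val_pow_eq_pow_val]
      exact Nat.find_min hex (by omega)
    · rw [Units.val_pow_eq_pow_val, ← pow_mul, ← pow_succ]
      have := Nat.find_spec hex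
      rwa [hj] at this
  obtain ⟨z, hzE', hz⟩ := hzE
  have hzE1 : IsPrimitiveRoot (⟨z, hzE'⟩ : E) ℓ :=
    IsPrimitiveRoot.of_map_of_injective (f := algebraMap E (AlgebraicClosure K)) hz
      (algebraMap E (AlgebraicClosure K)).injective
  have hrange : ∀ x : AlgebraicClosure K,
      x ∈ Set.range (algebraMap E (AlgebraicClosure K)) ↔ x ∈ E := by
    intro x
    constructor
    · rintro ⟨y, rfl⟩; exact y.2
    · intro hx; exact ⟨⟨x, hx⟩, rfl⟩
  obtain ⟨hfr, hfd, hgal⟩ := kummer_simple hℓ hzE1 (α := (α : AlgebraicClosure K))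
    (by rwa [hrange]) (by rwa [hrange])
  set E1 := IntermediateField.restrictScalars K E⟮(α : AlgebraicClosure K)⟯ with hE1
  have hEE1 : E ≤ E1 := fun x hx => E⟮(α : AlgebraicClosure K)⟯.algebraMap_mem ⟨x, hx⟩
  have hαE1 : (α : AlgebraicClosure K) ∈ E1 :=
    IntermediateField.mem_adjoin_simple_self E (α : AlgebraicClosure K)
  have hαM : (α : AlgebraicClosure K) ∈ M := IntermediateField.subset_adjoin K _ ⟨α, hαΓ, rfl⟩
  have hE1M : E1 ≤ M := by
    have h1 : E⟮(α : AlgebraicClosure K)⟯ ≤ IntermediateField.extendScalars hEM := by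
      rw [IntermediateField.adjoin_simple_le_iff]
      exact hαM
    exact fun x hx => h1 hx
  have hlt : (unitsIn E1).relIndex Γ < d := by
    have hle : unitsIn E ⊓ Γ ≤ unitsIn E1 ⊓ Γ := inf_le_inf_right _ (fun x hx => hEE1 hx)
    have hmul := Subgroup.relIndex_mul_relIndex _ _ _ hle (inf_le_right : unitsIn E1 ⊓ Γ ≤ Γ)
    rw [Subgroup.inf_relIndex_right, Subgroup.inf_relIndex_right, hd] at hmul
    have hne1 : (unitsIn E ⊓ Γ).relIndex (unitsIn E1 ⊓ Γ) ≠ 1 := by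
      rw [Ne, Subgroup.relIndex_eq_one]
      intro hcon
      exact hαE (hcon ⟨hαE1, hαΓ⟩).1
    have hne0 : (unitsIn E ⊓ Γ).relIndex (unitsIn E1 ⊓ Γ) ≠ 0 := by
      intro h0; rw [h0, zero_mul] at hmul; exact hd0 hmul.symm
    have hne0' : (unitsIn E1).relIndex Γ ≠ 0 := by
      intro h0; rw [h0, mul_zero] at hmul; exact hd0 hmul.symm
    have h2 : 2 ≤ (unitsIn E ⊓ Γ).relIndex (unitsIn E1 ⊓ Γ) := by omega
    have := Nat.mul_le_mul_right ((unitsIn E1).relIndex Γ) h2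
    omega
  have hne0' : (unitsIn E1).relIndex Γ ≠ 0 := by
    have := Subgroup.relIndex_dvd_of_le_left (H := unitsIn E) (K := unitsIn E1) Γ
      (fun x hx => hEE1 hx)
    intro h0
    rw [h0, zero_dvd_iff, hd] at this
    exact hd0 this
  obtain ⟨⟨k, hk⟩, hrec⟩ := ih _ hlt E1 rfl hne0' hE1M ⟨z, hEE1 hzE', hz⟩
  refine ⟨⟨k + 1, ?_⟩, ?_⟩
  · rw [← IntermediateField.relfinrank_mul_relfinrank hEE1 hE1M, hk, hE1, relfinrank_adjoin, hfr,
      pow_succ']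
  · intro β hβM n hβn
    obtain ⟨γ, hγ, e, he, rfl⟩ := hrec β hβM n (hEE1 hβn)
    -- `e ∈ E1` is radical over `E`
    obtain ⟨n', hn'⟩ := hrad γ hγ
    have hγn : (γ : AlgebraicClosure K) ^ (ℓ ^ n') ∈ E := (bot_le : ⊥ ≤ E) hn'
    have hen : (e : AlgebraicClosure K) ^ (ℓ ^ (n + n')) ∈ E := by
      have h1 : (((γ * e : (AlgebraicClosure K)ˣ) : AlgebraicClosure K) ^ (ℓ ^ n)) ^ (ℓ ^ n') /
          ((γ : AlgebraicClosure K) ^ (ℓ ^ n')) ^ (ℓ ^ n) ∈ E :=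
        div_mem (pow_mem hβn _) (pow_mem hγn _)
      convert h1 using 1
      have hγ0 : (γ : AlgebraicClosure K) ≠ 0 := γ.ne_zero
      rw [Units.val_mul, eq_div_iff (pow_ne_zero _ (pow_ne_zero _ hγ0))]
      rw [← pow_mul, ← pow_mul, ← pow_add, mul_pow, pow_add, pow_add, mul_comm (ℓ ^ n')]
      ring
    have hα' : (⟨α, hαE1⟩ : E⟮(α : AlgebraicClosure K)⟯) ∉
        Set.range (algebraMap E E⟮(α : AlgebraicClosure K)⟯) := by
      rintro ⟨y, hy⟩
      apply hαE
      have := congrArg Subtype.val hy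
      rw [← show ((y : E) : AlgebraicClosure K) = α from this]
      exact y.2
    obtain ⟨i, c, hic⟩ := rad_simple (F := E) (N := E⟮(α : AlgebraicClosure K)⟯) hℓ hodd hfr hzE1
      hα' ⟨⟨_, hαℓ⟩, rfl⟩ (e := ⟨(e : AlgebraicClosure K), he⟩)
      (by intro h0; exact e.ne_zero (congrArg Subtype.val h0)) (n := n + n') ⟨⟨_, hen⟩, rfl⟩
    have hic' : (e : AlgebraicClosure K) = (α : AlgebraicClosure K) ^ i * (c : AlgebraicClosure K) :=
      congrArg Subtype.val hic
    have hc0 : (c : AlgebraicClosure K) ≠ 0 := by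
      intro h0
      rw [h0, mul_zero] at hic'
      exact e.ne_zero hic'
    refine ⟨γ * α ^ i, mul_mem hγ (pow_mem hαΓ i), Units.mk0 _ hc0, c.2, ?_⟩
    ext
    simp [hic', mul_assoc]

lemma natCast_ne_zero_of_prime {K : Type*} [Field K] {q : ℕ} (hq : q.Prime)
    (h : q ≠ ringChar K) : (q : K) ≠ 0 := by
  rw [Ne, ringChar.spec]
  intro hd
  rcases (Nat.dvd_prime hq).1 hd with h1 | h1
  · exact CharP.ringChar_ne_one h1
  · exact h h1.symm

lemma exists_exponent {K : Type*} [Field K] {ℓ : ℕ} (hℓ : ℓ.Prime)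
    (S : Set (AlgebraicClosure K)ˣ) (hS : S.Finite)
    (h : ∀ x ∈ S, ∃ q : ℕ, q.Prime ∧ Odd q ∧ q ≠ ℓ ∧ q ≠ ringChar K ∧
        IsPrimitiveRoot (x : AlgebraicClosure K) q) :
    ∃ q : ℕ, q.Coprime ℓ ∧ (q : K) ≠ 0 ∧ ∀ x ∈ Subgroup.closure S, x ^ q = 1 := by
  suffices hs : ∃ q : ℕ, q.Coprime ℓ ∧ (q : K) ≠ 0 ∧ ∀ x ∈ S, x ^ q = 1 by
    obtain ⟨q, h1, h2, h3⟩ := hs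
    refine ⟨q, h1, h2, fun x hx => ?_⟩
    have : Subgroup.closure S ≤ (powMonoidHom q : (AlgebraicClosure K)ˣ →* _).ker := by
      rw [Subgroup.closure_le]
      intro y hy
      exact h3 y hy
    exact this hx
  induction S, hS using Set.Finite.induction_on with
  | empty => exact ⟨1, by simp, by simp, by simp⟩
  | @insert a s _ _ ih =>
    obtain ⟨q, h1, h2, h3⟩ := ih (fun x hx => h x (Set.mem_insert_of_mem _ hx))
    obtain ⟨r, hr, -, hrℓ, hrK, hra⟩ := h a (Set.mem_insert _ _)
    refine ⟨r * q, ?_, ?_, ?_⟩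
    · exact Nat.Coprime.mul_left ((Nat.coprime_primes hr hℓ).2 hrℓ) h1
    · push_cast
      exact mul_ne_zero (natCast_ne_zero_of_prime hr hrK) h2
    · intro x hx
      rcases Set.mem_insert_iff.1 hx with rfl | hx
      · have : x ^ r = 1 := by
          ext
          simpa using hra.pow_eq_one
        rw [pow_mul, this, one_pow]
      · rw [mul_comm, pow_mul, h3 x hx, one_pow]

/-- Lemma 5.1 (first part): with `ℓ` an odd prime different from `char K`, `ζ_ℓ ∉ K`,
`ζ_ℓ ∈ Γ`, and `τ ≥ 1` the largest integer such that `ζ_{ℓ^τ} ∈ Γ ∩ K(W_ℓ, ζ_ℓ)`, we have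
`K(Γ_ℓ) ∩ K(W_ℓ, ζ_ℓ) = K(ζ_{ℓ^τ})`. -/
theorem stmt11 (K : Type*) [Field K] (ℓ : ℕ) (hℓ : ℓ.Prime) (hℓodd : Odd ℓ)
    (hchar : ringChar K ≠ ℓ) (hnK : ¬ ∃ z : K, IsPrimitiveRoot z ℓ)
    (W : Subgroup (AlgebraicClosure K)ˣ)
    (hW : ∃ S : Set (AlgebraicClosure K)ˣ, S.Finite ∧
      (∀ x ∈ S, ∃ q : ℕ, q.Prime ∧ Odd q ∧ q ≠ ℓ ∧ q ≠ ringChar K ∧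
        IsPrimitiveRoot (x : AlgebraicClosure K) q) ∧ W = Subgroup.closure S)
    (Γℓ : Subgroup (AlgebraicClosure K)ˣ) (hΓK : baseUnits K ≤ Γℓ)
    (hidx : ∃ m : ℕ, Subgroup.relIndex (baseUnits K) Γℓ = ℓ ^ m)
    (hζΓ : ∃ x ∈ baseUnits K ⊔ W ⊔ Γℓ, IsPrimitiveRoot (x : AlgebraicClosure K) ℓ)
    (τ : ℕ) (hτ1 : 1 ≤ τ)
    (hτin : ∃ x : (AlgebraicClosure K)ˣ, IsPrimitiveRoot (x : AlgebraicClosure K) (ℓ ^ τ) ∧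
      x ∈ baseUnits K ⊔ W ⊔ Γℓ ∧ (x : AlgebraicClosure K) ∈
        IntermediateField.adjoin K (Units.val '' (W : Set (AlgebraicClosure K)ˣ) ∪ primRoots K ℓ))
    (hτmax : ∀ x : (AlgebraicClosure K)ˣ,
      IsPrimitiveRoot (x : AlgebraicClosure K) (ℓ ^ (τ + 1)) →
      ¬ (x ∈ baseUnits K ⊔ W ⊔ Γℓ ∧ (x : AlgebraicClosure K) ∈
        IntermediateField.adjoin K
          (Units.val '' (W : Set (AlgebraicClosure K)ˣ) ∪ primRoots K ℓ))) :
    IntermediateField.adjoin K (Units.val '' (Γℓ : Set (AlgebraicClosure K)ˣ)) ⊓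
        IntermediateField.adjoin K
          (Units.val '' (W : Set (AlgebraicClosure K)ˣ) ∪ primRoots K ℓ) =
      IntermediateField.adjoin K (primRoots K (ℓ ^ τ)) := by
  obtain ⟨S, hSfin, hS, hWS⟩ := hW
  obtain ⟨q, hqℓ, hqK, hWq⟩ := exists_exponent hℓ S hSfin hS
  rw [← hWS] at hWq
  obtain ⟨m, hm⟩ := hidx
  have hℓK : (ℓ : K) ≠ 0 := natCast_ne_zero_of_prime hℓ hchar.symm
  set M := IntermediateField.adjoin K (Units.val '' (Γℓ : Set (AlgebraicClosure K)ˣ)) with hMdef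
  set L := IntermediateField.adjoin K
    (Units.val '' (W : Set (AlgebraicClosure K)ˣ) ∪ primRoots K ℓ) with hLdef
  set E := IntermediateField.adjoin K (primRoots K (ℓ ^ τ)) with hEdef
  have hbase : ∀ g ∈ baseUnits K,
      (g : AlgebraicClosure K) ∈ Set.range (algebraMap K (AlgebraicClosure K)) := by
    rintro _ ⟨y, rfl⟩
    exact ⟨y, rfl⟩
  -- radicality
  have hrad0 : ∀ g ∈ Γℓ, (g : AlgebraicClosure K) ^ (ℓ ^ m) ∈
      Set.range (algebraMap K (AlgebraicClosure K)) := by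
    intro g hg
    have h1 := Subgroup.pow_index_mem ((baseUnits K).subgroupOf Γℓ) ⟨g, hg⟩
    have h2 : ((baseUnits K).subgroupOf Γℓ).index = ℓ ^ m := hm
    rw [h2, Subgroup.mem_subgroupOf] at h1
    have := hbase _ h1
    simpa using this
  have hrad : ∀ g ∈ Γℓ, ∃ n : ℕ,
      (g : AlgebraicClosure K) ^ (ℓ ^ n) ∈ (⊥ : IntermediateField K (AlgebraicClosure K)) := by
    intro g hg
    exact ⟨m, IntermediateField.mem_bot.2 (hrad0 g hg)⟩
  -- roots of unity of `ℓ`-power order in `Γ` lie in `Γℓ`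
  have hΓroot : ∀ x ∈ baseUnits K ⊔ W ⊔ Γℓ, ∀ j : ℕ, x ^ (ℓ ^ j) = 1 → x ∈ Γℓ := by
    intro x hx j hxj
    have hle : baseUnits K ⊔ W ⊔ Γℓ ≤ W ⊔ Γℓ :=
      sup_le (sup_le (hΓK.trans le_sup_right) le_sup_left) le_sup_right
    obtain ⟨w, hw, g, hg, rfl⟩ := Subgroup.mem_sup.1 (hle hx)
    have hxq : (w * g) ^ q ∈ Γℓ := by
      rw [mul_pow, hWq w hw, one_mul]
      exact pow_mem hg q
    have hcop : IsCoprime (q : ℤ) ((ℓ ^ j : ℕ) : ℤ) :=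
      Nat.isCoprime_iff_coprime.2 (Nat.Coprime.pow_right j hqℓ)
    obtain ⟨u, v, huv⟩ := hcop
    have : w * g = ((w * g) ^ q) ^ u * ((w * g) ^ (ℓ ^ j)) ^ v := by
      rw [← zpow_natCast, ← zpow_natCast (w * g) (ℓ ^ j), ← zpow_mul, ← zpow_mul, ← zpow_add,
        mul_comm (q : ℤ), mul_comm _ v, huv, zpow_one]
    rw [this, hxj, one_zpow, mul_one]
    exact zpow_mem hxq u
  -- the root of unity of order `ℓ ^ τ`
  obtain ⟨x, hx, hxΓ, hxL⟩ := hτin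
  have hxΓℓ : x ∈ Γℓ := hΓroot x hxΓ τ (by ext; simpa using hx.pow_eq_one)
  have hxM : (x : AlgebraicClosure K) ∈ M := IntermediateField.subset_adjoin K _ ⟨x, hxΓℓ, rfl⟩
  have hxE : (x : AlgebraicClosure K) ∈ E := IntermediateField.subset_adjoin K _ hx
  have : NeZero (ℓ ^ τ) := ⟨pow_ne_zero _ hℓ.ne_zero⟩
  have hEle : ∀ A : IntermediateField K (AlgebraicClosure K), (x : AlgebraicClosure K) ∈ A →
      E ≤ A := by
    intro A hA
    rw [hEdef, IntermediateField.adjoin_le_iff]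
    intro y hy
    obtain ⟨i, -, rfl⟩ := hx.eq_pow_of_pow_eq_one (IsPrimitiveRoot.pow_eq_one hy)
    exact pow_mem hA i
  have hEF : E ≤ M ⊓ L := le_inf (hEle M hxM) (hEle L hxL)
  apply le_antisymm _ hEF
  by_contra hFE
  -- a primitive `ℓ`-th root of unity
  set z : AlgebraicClosure K := (x : AlgebraicClosure K) ^ (ℓ ^ (τ - 1)) with hzdef
  have hz : IsPrimitiveRoot z ℓ :=
    hx.pow (pow_pos hℓ.pos _) (by rw [← pow_succ]; congr 1; omega)
  have hzE : z ∈ E := pow_mem hxE _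
  have hzL : z ∈ L := (hEF hzE).2
  -- Kneser
  have hidx0 : (unitsIn E).relIndex Γℓ ≠ 0 := by
    have hle : baseUnits K ≤ unitsIn E := by
      intro g hg
      obtain ⟨y, hy⟩ := hbase g hg
      show (g : AlgebraicClosure K) ∈ E
      rw [← hy]
      exact E.algebraMap_mem y
    have := Subgroup.relIndex_dvd_of_le_left Γℓ hle
    intro h0
    rw [h0, zero_dvd_iff, hm] at this
    exact pow_ne_zero _ hℓ.ne_zero this
  obtain ⟨⟨k, hk⟩, hkn⟩ := kneser K hℓ hℓodd Γℓ hrad _ E rfl hidx0 (hEF.trans inf_le_left)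
    ⟨z, hzE, hz⟩
  -- the cyclotomic field
  have hN0 : ((q * ℓ : ℕ) : AlgebraicClosure K) ≠ 0 := by
    have h1 : ((q * ℓ : ℕ) : K) ≠ 0 := by push_cast; exact mul_ne_zero hqK hℓK
    intro h0
    apply h1
    apply (algebraMap K (AlgebraicClosure K)).injective
    rw [map_natCast, map_zero, h0]
  have : NeZero ((q * ℓ : ℕ) : AlgebraicClosure K) := ⟨hN0⟩
  have : NeZero (q * ℓ) := ⟨by rintro h0; rw [h0] at hN0; simp at hN0⟩
  obtain ⟨ξ, hξ⟩ := HasEnoughRootsOfUnity.exists_primitiveRoot (AlgebraicClosure K) (q * ℓ)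
  have hcyc : IsCyclotomicExtension {q * ℓ} K K⟮ξ⟯ :=
    hξ.intermediateField_adjoin_isCyclotomicExtension K
  have hab : IsAbelianGalois K K⟮ξ⟯ := IsCyclotomicExtension.isAbelianGalois {q * ℓ} K K⟮ξ⟯
  have hfdC : FiniteDimensional K K⟮ξ⟯ :=
    IntermediateField.adjoin.finiteDimensional (Algebra.IsIntegral.isIntegral ξ)
  have hLC : L ≤ K⟮ξ⟯ := by
    rw [hLdef, IntermediateField.adjoin_le_iff]
    have hmem : ∀ y : AlgebraicClosure K, y ^ (q * ℓ) = 1 → y ∈ K⟮ξ⟯ := by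
      intro y hy
      obtain ⟨i, -, rfl⟩ := hξ.eq_pow_of_pow_eq_one hy
      exact pow_mem (IntermediateField.mem_adjoin_simple_self K ξ) i
    rintro y (⟨w, hw, rfl⟩ | hy)
    · apply hmem
      have := congrArg Units.val (hWq w hw)
      rw [Units.val_pow_eq_pow_val, Units.val_one] at this
      rw [pow_mul, this, one_pow]
    · apply hmem
      rw [mul_comm, pow_mul, IsPrimitiveRoot.pow_eq_one hy, one_pow]
  -- elements of `Γℓ ∩ L` lie in `E`
  have hΓL : ∀ γ ∈ Γℓ, (γ : AlgebraicClosure K) ∈ L → (γ : AlgebraicClosure K) ∈ E := by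
    intro γ hγ hγL
    have hzC : IsPrimitiveRoot (⟨z, hLC hzL⟩ : K⟮ξ⟯) ℓ :=
      IsPrimitiveRoot.of_map_of_injective (f := algebraMap K⟮ξ⟯ (AlgebraicClosure K)) hz
        (algebraMap K⟮ξ⟯ (AlgebraicClosure K)).injective
    have hzC' : (⟨z, hLC hzL⟩ : K⟮ξ⟯) ∉ Set.range (algebraMap K K⟮ξ⟯) := by
      rintro ⟨y, hy⟩
      apply hnK
      refine ⟨y, ?_⟩
      rw [← hy] at hzC
      exact IsPrimitiveRoot.of_map_of_injective (f := algebraMap K K⟮ξ⟯) hzC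
        (algebraMap K K⟮ξ⟯).injective
    obtain ⟨η, c, hη, hηc⟩ := schinzel (K := K) (C := K⟮ξ⟯) hℓ hzC hzC'
      (g := ⟨(γ : AlgebraicClosure K), hLC hγL⟩)
      (fun h0 => γ.ne_zero (congrArg Subtype.val h0)) (n := m) (by
        obtain ⟨a, ha⟩ := hrad0 γ hγ
        exact ⟨a, Subtype.ext ha⟩)
    have hηc' : (γ : AlgebraicClosure K) =
        (η : AlgebraicClosure K) * algebraMap K (AlgebraicClosure K) c :=
      congrArg Subtype.val hηc
    have hη' : (η : AlgebraicClosure K) ^ (ℓ ^ (m + 1)) = 1 := congrArg Subtype.val hη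
    have hc0 : c ≠ 0 := by
      rintro rfl
      rw [map_zero, mul_zero] at hηc'
      exact γ.ne_zero hηc'
    have hη0 : (η : AlgebraicClosure K) ≠ 0 := by
      intro h0
      rw [h0, zero_mul] at hηc'
      exact γ.ne_zero hηc'
    have hcA : algebraMap K (AlgebraicClosure K) c ≠ 0 := by simpa using hc0
    set u : (AlgebraicClosure K)ˣ := Units.mk0 (η : AlgebraicClosure K) hη0 with hu
    have huval : (u : AlgebraicClosure K) = η := rfl
    have huγ : u = γ *
        (Units.map (algebraMap K (AlgebraicClosure K)).toMonoidHom (Units.mk0 c hc0))⁻¹ := by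
      rw [eq_mul_inv_iff_mul_eq]
      ext
      exact hηc'.symm
    have huΓ : u ∈ Γℓ := by
      rw [huγ]
      exact mul_mem hγ (inv_mem (hΓK ⟨_, rfl⟩))
    have huL : (u : AlgebraicClosure K) ∈ L := by
      have : (u : AlgebraicClosure K) =
          (γ : AlgebraicClosure K) / algebraMap K (AlgebraicClosure K) c := by
        rw [huval, hηc']
        field_simp
      rw [this]
      exact div_mem hγL (L.algebraMap_mem c)
    -- the order of `u`
    obtain ⟨j, -, hj⟩ := (Nat.dvd_prime_pow hℓ).1 (orderOf_dvd_of_pow_eq_one hη')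
    have hprim : IsPrimitiveRoot (u : AlgebraicClosure K) (ℓ ^ j) :=
      hj ▸ IsPrimitiveRoot.orderOf (η : AlgebraicClosure K)
    have hjτ : j ≤ τ := by
      by_contra! hlt
      refine hτmax (u ^ (ℓ ^ (j - (τ + 1)))) ?_ ⟨?_, ?_⟩
      · rw [Units.val_pow_eq_pow_val]
        exact hprim.pow (pow_pos hℓ.pos _) (by rw [← pow_add]; congr 1; omega)
      · exact (le_sup_right : Γℓ ≤ _) (pow_mem huΓ _)
      · rw [Units.val_pow_eq_pow_val]
        exact pow_mem huL _
    have huE : (u : AlgebraicClosure K) ∈ E := by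
      obtain ⟨i, -, hi⟩ := hx.eq_pow_of_pow_eq_one (ξ := (u : AlgebraicClosure K))
        ((hprim.pow_eq_one_iff_dvd _).2 (pow_dvd_pow _ hjτ))
      rw [← hi]
      exact pow_mem hxE i
    rw [hηc', ← huval]
    exact mul_mem huE (E.algebraMap_mem c)
  -- the degree of the intersection
  have hmul := IntermediateField.relfinrank_mul_relfinrank hEF (inf_le_left : M ⊓ L ≤ M)
  rw [hk] at hmul
  obtain ⟨j, -, hj⟩ := (Nat.dvd_prime_pow hℓ).1 (Dvd.intro _ hmul)
  have hj0 : j ≠ 0 := by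
    rintro rfl
    rw [pow_zero, IntermediateField.relfinrank_eq_one_iff] at hj
    exact hFE hj
  obtain ⟨j, rfl⟩ := Nat.exists_eq_succ_of_ne_zero hj0
  rw [IntermediateField.relfinrank_eq_finrank_of_le hEF] at hj
  have hfdF : FiniteDimensional E (IntermediateField.extendScalars hEF) :=
    Module.finite_of_finrank_pos (by rw [hj]; exact pow_pos hℓ.pos _)
  have habF : IsAbelianGalois E (IntermediateField.extendScalars hEF) := by
    have h1 : IsAbelianGalois K (M ⊓ L : IntermediateField K (AlgebraicClosure K)) :=
      IsAbelianGalois.of_algHom (IntermediateField.inclusion (inf_le_right.trans hLC))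
    have h2 : IsAbelianGalois K (IntermediateField.extendScalars hEF) := h1
    exact IsAbelianGalois.tower_top K E (IntermediateField.extendScalars hEF)
  have hzE1 : IsPrimitiveRoot (⟨z, hzE⟩ : E) ℓ :=
    IsPrimitiveRoot.of_map_of_injective (f := algebraMap E (AlgebraicClosure K)) hz
      (algebraMap E (AlgebraicClosure K)).injective
  obtain ⟨β, hβ, b, hb⟩ := exists_kummer hℓ hzE1 hj
  have hβE : (β : AlgebraicClosure K) ∉ E := by
    intro h
    exact hβ ⟨⟨_, h⟩, rfl⟩
  have hβF : (β : AlgebraicClosure K) ∈ M ⊓ L := β.2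
  have hβℓ : (β : AlgebraicClosure K) ^ ℓ ∈ E := by
    have h1 : ((b : E) : AlgebraicClosure K) = (β : AlgebraicClosure K) ^ ℓ :=
      congrArg Subtype.val hb
    rw [← h1]
    exact b.2
  have hβ0 : (β : AlgebraicClosure K) ≠ 0 := by
    intro h0
    exact hβE (h0 ▸ zero_mem E)
  obtain ⟨γ, hγ, e, he, hγe⟩ := hkn (Units.mk0 _ hβ0) hβF.1 1 (by simpa using hβℓ)
  have hγe' : (β : AlgebraicClosure K) = (γ : AlgebraicClosure K) * (e : AlgebraicClosure K) :=
    congrArg Units.val hγe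
  have heE : (e : AlgebraicClosure K) ∈ E := he
  have hγL : (γ : AlgebraicClosure K) ∈ L := by
    have : (γ : AlgebraicClosure K) = (β : AlgebraicClosure K) / (e : AlgebraicClosure K) := by
      rw [hγe', mul_div_cancel_right₀ _ e.ne_zero]
    rw [this]
    exact div_mem hβF.2 (hEF heE).2
  apply hβE
  rw [hγe']
  exact mul_mem (hΓL γ hγ hγL) heE

end
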